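/- arXiv:1707.09501 — 7 statements merged into one kernel-verified Lean document; each statement's English description precedes it below -/
import Mathlib

section
/- Let M, N be nonnegative integers, let a_0 < a_1 < ... < a_N be real numbers, and let K_N = K_N(a_0,...,a_N) be the union of the N+1 horizontal lines L_j = {(x_1,x_2) ∈ ℝ² : x_2 = a_j}. Let {s_{m,n}}_{0≤m≤M, 0≤n≤N} be real numbers, and for each m ∈ {0,...,M} let (s_m(0),...,s_m(N)) be the unique real solution of the linear system Σ_{j=0}^N a_j^n s_m(j) = s_{m,n} (n = 0,...,N), whose coefficient matrix is the invertible Vandermonde matrix of a_0,...,a_N. Then there exists a nonnegative Borel measure μ on ℝ² with supp μ ⊆ K_N and ∫_{ℝ²} x_1^m x_2^n dμ = s_{m,n} for all 0≤m≤M, 0≤n≤N, if and only if for each j ∈ {0,...,N} there exists a nonnegative Borel measure σ_j on ℝ with ∫_ℝ x^m dσ_j = s_m(j) for all m = 0,...,M. -/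
open MeasureTheory

/-- Proposition 2.1: the truncated `K_N(a_0,...,a_N)`-moment problem (support on the
union of the horizontal lines `x_2 = a_j`) is solvable iff each of the associated
truncated Hamburger moment problems, whose moments `s_m(j)` solve the Vandermonde
linear system `∑_j a_j^n s_m(j) = s_{m,n}`, is solvable. -/
theorem truncated_KN_moment_problem_solvable_iff
    (M N : ℕ) (a : Fin (N + 1) → ℝ) (ha : StrictMono a)
    (s : Fin (M + 1) → Fin (N + 1) → ℝ) (sj : Fin (M + 1) → Fin (N + 1) → ℝ)
    (hsj : ∀ (m : Fin (M + 1)) (n : Fin (N + 1)),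
      ∑ j, a j ^ (n : ℕ) * sj m j = s m n) :
    (∃ μ : Measure (ℝ × ℝ),
      μ (⋃ j, {p : ℝ × ℝ | p.2 = a j})ᶜ = 0 ∧
      ∀ (m : Fin (M + 1)) (n : Fin (N + 1)),
        Integrable (fun p : ℝ × ℝ => p.1 ^ (m : ℕ) * p.2 ^ (n : ℕ)) μ ∧
        ∫ p : ℝ × ℝ, p.1 ^ (m : ℕ) * p.2 ^ (n : ℕ) ∂μ = s m n)
    ↔ ∀ j : Fin (N + 1), ∃ σ : Measure ℝ,
        ∀ m : Fin (M + 1),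
          Integrable (fun x : ℝ => x ^ (m : ℕ)) σ ∧
          ∫ x : ℝ, x ^ (m : ℕ) ∂σ = sj m j := by
  constructor
  · rintro ⟨μ, hμ, hmom⟩ j
    have hline (j) : MeasurableSet {p : ℝ × ℝ | p.2 = a j} :=
      measurableSet_eq_fun measurable_snd measurable_const
    have hdisj : Pairwise (Function.onFun Disjoint fun j => {p : ℝ × ℝ | p.2 = a j}) := by
      intro i k hik
      exact Set.disjoint_left.2 fun p (hi : p.2 = a i) (hk : p.2 = a k) =>
        hik (ha.injective (hi.symm.trans hk))
    have hint (m : Fin (M + 1)) : Integrable (fun p : ℝ × ℝ => p.1 ^ (m : ℕ)) μ := by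
      simpa using (hmom m 0).1
    have hrestrict : μ.restrict (⋃ j, {p : ℝ × ℝ | p.2 = a j}) = μ :=
      Measure.restrict_eq_self_of_ae_mem (mem_ae_iff.2 hμ)
    have hsum (m : Fin (M + 1)) (n : Fin (N + 1)) :
        ∑ k, (∫ p in {p : ℝ × ℝ | p.2 = a k}, p.1 ^ (m : ℕ) ∂μ) * a k ^ (n : ℕ) = s m n := by
      have hlines := integral_iUnion_fintype hline hdisj fun k =>
        (hmom m n).1.integrableOn (s := {p | p.2 = a k})
      rw [hrestrict, (hmom m n).2] at hlines
      rw [hlines]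
      refine Finset.sum_congr rfl fun k _ => ?_
      rw [← integral_mul_const]
      refine setIntegral_congr_fun (hline k) fun p hp => ?_
      simp only [show p.2 = a k from hp]
    have hvand (m : Fin (M + 1)) :
        (fun k => (∫ p in {p : ℝ × ℝ | p.2 = a k}, p.1 ^ (m : ℕ) ∂μ) - sj m k) = 0 := by
      refine Matrix.eq_zero_of_forall_pow_sum_mul_pow_eq_zero ha.injective fun n => ?_
      simp only [sub_mul, Finset.sum_sub_distrib, hsum, ← hsj m n]
      simp only [mul_comm, sub_self]
    refine ⟨(μ.restrict {p | p.2 = a j}).map Prod.fst, fun m => ⟨?_, ?_⟩⟩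
    · rw [integrable_map_measure (by fun_prop) (by fun_prop)]
      exact (hint m).restrict
    · rw [integral_map (by fun_prop) (by fun_prop)]
      exact sub_eq_zero.1 (congrFun (hvand m) j)
  · intro h
    choose σ hσ using h
    have hemb (j) : Measurable fun x : ℝ => (x, a j) := by fun_prop
    have hint (m : Fin (M + 1)) (n : Fin (N + 1)) (j) :
        Integrable (fun p : ℝ × ℝ => p.1 ^ (m : ℕ) * p.2 ^ (n : ℕ)) ((σ j).map fun x => (x, a j)) := by
      rw [integrable_map_measure (by fun_prop) (by fun_prop)]
      exact (hσ j m).1.mul_const (a j ^ (n : ℕ))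
    refine ⟨∑ j, (σ j).map fun x => (x, a j), ?_, fun m n => ⟨?_, ?_⟩⟩
    · have hmeas : MeasurableSet (⋃ j, {p : ℝ × ℝ | p.2 = a j})ᶜ :=
        (MeasurableSet.iUnion fun j =>
          measurableSet_eq_fun measurable_snd measurable_const).compl
      rw [Measure.finsetSum_apply]
      refine Finset.sum_eq_zero fun j _ => ?_
      rw [Measure.map_apply (hemb j) hmeas]
      convert measure_empty (μ := σ j)
      ext x
      simp
    · exact integrable_finsetSum_measure.2 fun j _ => hint m n j
    · rw [integral_finsetSum_measure fun j _ => hint m n j, ← hsj m n]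
      refine Finset.sum_congr rfl fun j _ => ?_
      rw [integral_map (by fun_prop) (by fun_prop)]
      dsimp only
      rw [integral_mul_const, (hσ j m).2, mul_comm]
end

section
/- Let M, N be nonnegative integers, let a_0 < a_1 < ... < a_N be real numbers, and let K_N be the union of the horizontal lines L_j = {(x_1,x_2) ∈ ℝ² : x_2 = a_j}, j = 0,...,N. Suppose μ is a nonnegative Borel measure on ℝ² with supp μ ⊆ K_N such that the monomials x_1^m x_2^n are μ-integrable for 0≤m≤M, 0≤n≤N, and set s_{m,n} = ∫_{ℝ²} x_1^m x_2^n dμ. For each j, let σ_j be the measure on ℝ obtained by restricting μ to the line L_j and identifying L_j with ℝ via (x_1, a_j) ↦ x_1. Then for every m ∈ {0,...,M} and n ∈ {0,...,N}, s_{m,n} = Σ_{j=0}^N a_j^n ∫_ℝ x^m dσ_j; in particular, the numbers s_m(j) := ∫_ℝ x^m dσ_j are the unique solution of the Vandermonde linear system Σ_{j=0}^N a_j^n s_m(j) = s_{m,n} (n = 0,...,N). -/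
open MeasureTheory

/-- Necessity direction of Proposition 2.1: if `μ` solves the truncated
`K_N(a_0,...,a_N)`-moment problem, then the moments of the restrictions of `μ`
to the lines `x_2 = a_j` (identified with `ℝ` via `(x_1, a_j) ↦ x_1`) solve the
Vandermonde linear system `∑_j a_j^n ∫ x^m dσ_j = s_{m,n}`. -/
theorem moments_of_line_restrictions_solve_vandermonde_system
    (M N : ℕ) (a : Fin (N + 1) → ℝ) (ha : StrictMono a)
    (μ : Measure (ℝ × ℝ))
    (hsupp : μ (⋃ j, {p : ℝ × ℝ | p.2 = a j})ᶜ = 0)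
    (hint : ∀ (m : Fin (M + 1)) (n : Fin (N + 1)),
      Integrable (fun p : ℝ × ℝ => p.1 ^ (m : ℕ) * p.2 ^ (n : ℕ)) μ)
    (s : Fin (M + 1) → Fin (N + 1) → ℝ)
    (hs : ∀ (m : Fin (M + 1)) (n : Fin (N + 1)),
      s m n = ∫ p : ℝ × ℝ, p.1 ^ (m : ℕ) * p.2 ^ (n : ℕ) ∂μ)
    (σ : Fin (N + 1) → Measure ℝ)
    (hσ : ∀ j, σ j = Measure.map Prod.fst (μ.restrict {p : ℝ × ℝ | p.2 = a j})) :
    ∀ (m : Fin (M + 1)) (n : Fin (N + 1)),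
      s m n = ∑ j, a j ^ (n : ℕ) * ∫ x : ℝ, x ^ (m : ℕ) ∂(σ j) := by
  intro m n
  have hmeas : ∀ j, MeasurableSet {p : ℝ × ℝ | p.2 = a j} := fun j =>
    measurableSet_eq_fun measurable_snd measurable_const
  have hdisj : Pairwise (Function.onFun Disjoint fun j => {p : ℝ × ℝ | p.2 = a j}) := by
    intro i j hij
    refine Set.disjoint_left.2 fun p hi hj => hij (ha.injective ?_)
    exact (Eq.symm hi).trans hj
  have hrestrict : μ.restrict (⋃ j, {p : ℝ × ℝ | p.2 = a j}) = μ :=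
    Measure.restrict_eq_self_of_ae_mem (mem_ae_iff.2 hsupp)
  rw [hs, ← hrestrict, integral_iUnion_fintype hmeas hdisj fun j => (hint m n).integrableOn]
  refine Finset.sum_congr rfl fun j _ => ?_
  rw [hσ, integral_map measurable_fst.aemeasurable (by fun_prop), ← integral_const_mul]
  refine setIntegral_congr_fun (hmeas j) fun p hp => ?_
  have hp' : p.2 = a j := hp
  simp only [hp', mul_comm]
end

section
/- Let s_{0,0}, s_{0,1}, s_{1,0}, s_{1,1} be real numbers. There exists a nonnegative Borel measure μ on ℝ² such that x_1^m x_2^n is μ-integrable and ∫_{ℝ²} x_1^m x_2^n dμ = s_{m,n} for all m, n ∈ {0,1}, if and only if either (i) s_{0,0} = s_{0,1} = s_{1,0} = s_{1,1} = 0, or (ii) s_{0,0} > 0. -/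
open MeasureTheory

/-- Integration against the measure with mass `w` at each of the points `P` and `Q`. -/
lemma integrable_and_integral_two_dirac {α : Type*} [MeasurableSpace α]
    [MeasurableSingletonClass α] {w : ℝ} (hw : 0 ≤ w) (P Q : α) (f : α → ℝ) :
    Integrable f (ENNReal.ofReal w • (Measure.dirac P + Measure.dirac Q)) ∧
      ∫ x, f x ∂(ENNReal.ofReal w • (Measure.dirac P + Measure.dirac Q)) = w * (f P + f Q) := by
  have hf (x : α) : Integrable f (Measure.dirac x) := integrable_dirac (by simp)
  refine ⟨((hf P).add_measure (hf Q)).smul_measure ENNReal.ofReal_ne_top, ?_⟩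
  rw [integral_smul_measure, integral_add_measure (hf P) (hf Q), integral_dirac, integral_dirac,
    ENNReal.toReal_ofReal hw, smul_eq_mul]

/-- Theorem 2.1: the truncated two-dimensional moment problem with `M = N = 1` is
solvable iff either all four moments vanish, or `s_{0,0} > 0`. -/
theorem truncated_moment_problem_M1_N1_solvable_iff (s : ℕ → ℕ → ℝ) :
    (∃ μ : Measure (ℝ × ℝ), ∀ m ≤ 1, ∀ n ≤ 1,
        Integrable (fun p : ℝ × ℝ => p.1 ^ m * p.2 ^ n) μ ∧
        ∫ p : ℝ × ℝ, p.1 ^ m * p.2 ^ n ∂μ = s m n)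
    ↔ ((s 0 0 = 0 ∧ s 0 1 = 0 ∧ s 1 0 = 0 ∧ s 1 1 = 0) ∨ 0 < s 0 0) := by
  constructor
  · rintro ⟨μ, h⟩
    obtain ⟨hint, hmass⟩ := h 0 zero_le_one 0 zero_le_one
    simp only [pow_zero, mul_one] at hint hmass
    have : IsFiniteMeasure μ := (integrable_const_iff_isFiniteMeasure one_ne_zero).1 hint
    rw [integral_const, smul_eq_mul, mul_one] at hmass
    rcases (hmass ▸ measureReal_nonneg : 0 ≤ s 0 0).eq_or_lt with h0 | h0
    · left
      have hμ : μ = 0 := by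
        rw [← h0, measureReal_eq_zero_iff] at hmass
        exact Measure.measure_univ_eq_zero.1 hmass
      have hs (m n : ℕ) (hm : m ≤ 1) (hn : n ≤ 1) : s m n = 0 := by
        rw [← (h m hm n hn).2, hμ, integral_zero_measure]
      exact ⟨hs 0 0 (by simp) (by simp), hs 0 1 (by simp) (by simp),
        hs 1 0 (by simp) (by simp), hs 1 1 (by simp) (by simp)⟩
    · exact Or.inr h0
  · rintro (⟨h00, h01, h10, h11⟩ | hpos)
    · refine ⟨0, fun m hm n hn => ⟨integrable_zero_measure, ?_⟩⟩
      rw [integral_zero_measure]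
      interval_cases m <;> interval_cases n <;> simp [*]
    · -- Two equal atoms placed symmetrically about the mean; the offset fixes the mixed moment.
      set a := s 1 0 / s 0 0 with ha
      set b := s 0 1 / s 0 0 with hb
      set u := s 1 1 / s 0 0 - a * b with hu
      refine ⟨ENNReal.ofReal (s 0 0 / 2) •
        (Measure.dirac (a + 1, b + u) + Measure.dirac (a - 1, b - u)), fun m hm n hn => ?_⟩
      obtain ⟨hint, heq⟩ := integrable_and_integral_two_dirac (half_pos hpos).le
        (a + 1, b + u) (a - 1, b - u) (fun p : ℝ × ℝ => p.1 ^ m * p.2 ^ n)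
      refine ⟨hint, heq.trans ?_⟩
      have h10 : s 1 0 = s 0 0 * a := by rw [ha]; field_simp
      have h01 : s 0 1 = s 0 0 * b := by rw [hb]; field_simp
      have h11 : s 1 1 = s 0 0 * (u + a * b) := by rw [hu]; field_simp; ring
      clear_value a b u
      interval_cases m <;> interval_cases n <;> simp only [h10, h01, h11] <;> ring
end

section
/- Let {s_{m,n}} with m ∈ {0,1}, n ∈ {0,1,2} be real numbers. There exists a nonnegative Borel measure μ on ℝ² such that x_1^m x_2^n is μ-integrable and ∫_{ℝ²} x_1^m x_2^n dμ = s_{m,n} for all m ∈ {0,1}, n ∈ {0,1,2}, if and only if one of the following holds: (a) s_{0,0} = s_{0,1} = s_{0,2} = s_{1,0} = s_{1,1} = s_{1,2} = 0; (b) s_{0,0} > 0 and there exists α ∈ ℝ with s_{m,n} = α^n s_{m,0} for m = 0,1 and n = 1,2; (c) s_{0,0} > 0 and s_{0,0} s_{0,2} − s_{0,1}² > 0. -/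
open MeasureTheory

/-- Integration against a finite sum of point masses with nonnegative weights. -/
theorem integrable_and_integral_sum_ofReal_smul_dirac {ι X : Type*} [MeasurableSpace X]
    [MeasurableSingletonClass X] (t : Finset ι) (w : ι → ℝ) (hw : ∀ i ∈ t, 0 ≤ w i)
    (x : ι → X) (f : X → ℝ) :
    Integrable f (∑ i ∈ t, ENNReal.ofReal (w i) • Measure.dirac (x i)) ∧
      ∫ y, f y ∂(∑ i ∈ t, ENNReal.ofReal (w i) • Measure.dirac (x i)) =
        ∑ i ∈ t, w i * f (x i) := by
  have hint : ∀ i ∈ t, Integrable f (ENNReal.ofReal (w i) • Measure.dirac (x i)) := fun i _ =>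
    (integrable_dirac (by simp)).smul_measure ENNReal.ofReal_ne_top
  refine ⟨integrable_finsetSum_measure.2 hint, ?_⟩
  rw [integral_finsetSum_measure hint]
  refine Finset.sum_congr rfl fun i hi => ?_
  rw [integral_smul_measure, integral_dirac, ENNReal.toReal_ofReal (hw i hi), smul_eq_mul]

/-- Real numbers `s m n` with `m ≤ 1`, `n ≤ 2` are the moments of a finitely atomic measure as soon
as `s 0 n` are the moments of positive weights at nodes `t i`, and `s 1 n` those of arbitrary
real weights at the same nodes. -/
theorem exists_measure_moments_of_weights {ι : Type*} [Fintype ι] (s : ℕ → ℕ → ℝ)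
    (w c t : ι → ℝ) (hw : ∀ i, 0 < w i) (h0 : ∀ n ≤ 2, ∑ i, w i * t i ^ n = s 0 n)
    (h1 : ∀ n ≤ 2, ∑ i, c i * t i ^ n = s 1 n) :
    ∃ μ : Measure (ℝ × ℝ), ∀ m ≤ 1, ∀ n ≤ 2,
      Integrable (fun p : ℝ × ℝ => p.1 ^ m * p.2 ^ n) μ ∧
      ∫ p : ℝ × ℝ, p.1 ^ m * p.2 ^ n ∂μ = s m n := by
  refine ⟨∑ i, ENNReal.ofReal (w i) • Measure.dirac (c i / w i, t i), fun m hm n hn => ?_⟩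
  obtain ⟨hi, he⟩ := integrable_and_integral_sum_ofReal_smul_dirac Finset.univ w
    (fun i _ => (hw i).le) (fun i => (c i / w i, t i)) (fun p : ℝ × ℝ => p.1 ^ m * p.2 ^ n)
  refine ⟨hi, he.trans ?_⟩
  interval_cases m
  · simpa using h0 n hn
  · rw [← h1 n hn]
    refine Finset.sum_congr rfl fun i _ => ?_
    have := (hw i).ne'
    field_simp

/-- If `s 0 0 > 0` and `s 0 0 * s 0 2 - s 0 1 ^ 2 > 0`, three atoms suffice: the nodes are the mean
and the mean plus or minus `h`, where `h ^ 2` is twice the variance. -/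
theorem exists_measure_moments_of_hankel_pos (s : ℕ → ℕ → ℝ) (hs : 0 < s 0 0)
    (hdet : 0 < s 0 0 * s 0 2 - s 0 1 ^ 2) :
    ∃ μ : Measure (ℝ × ℝ), ∀ m ≤ 1, ∀ n ≤ 2,
      Integrable (fun p : ℝ × ℝ => p.1 ^ m * p.2 ^ n) μ ∧
      ∫ p : ℝ × ℝ, p.1 ^ m * p.2 ^ n ∂μ = s m n := by
  obtain ⟨a, ha⟩ : ∃ a, s 0 1 = a * s 0 0 := ⟨s 0 1 / s 0 0, by field_simp⟩
  obtain ⟨h, hpos, hh⟩ : ∃ h : ℝ, 0 < h ∧ s 0 2 = s 0 0 * (a ^ 2 + h ^ 2 / 2) := by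
    have hv : 0 < 2 * (s 0 0 * s 0 2 - s 0 1 ^ 2) / s 0 0 ^ 2 := by positivity
    refine ⟨√(2 * (s 0 0 * s 0 2 - s 0 1 ^ 2) / s 0 0 ^ 2), Real.sqrt_pos.2 hv, ?_⟩
    rw [Real.sq_sqrt hv.le, ha]
    field_simp
    ring
  have hne := hpos.ne'
  set u₁ := s 1 1 - a * s 1 0 with hu₁
  set u₂ := s 1 2 - 2 * a * s 1 1 + a ^ 2 * s 1 0 with hu₂
  refine exists_measure_moments_of_weights s ![s 0 0 / 4, s 0 0 / 2, s 0 0 / 4]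
    ![(u₂ - h * u₁) / (2 * h ^ 2), s 1 0 - u₂ / h ^ 2, (u₂ + h * u₁) / (2 * h ^ 2)]
    ![a - h, a, a + h] (fun i => ?_) (fun n hn => ?_) (fun n hn => ?_)
  · fin_cases i <;> simp <;> linarith
  · interval_cases n <;> simp [Fin.sum_univ_three, ha, hh] <;> ring
  · interval_cases n <;> simp only [Fin.sum_univ_three, Matrix.cons_val] <;> field_simp <;>
      rw [hu₂] <;> try rw [hu₁]
    all_goals ring

/-- If the variance of `g` vanishes in the sense that `∫ (g - α) ^ 2 ≤ 0`, then `g = α` almost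
everywhere. -/
theorem ae_eq_const_of_integral_sub_sq_nonpos {X : Type*} [MeasurableSpace X] {μ : Measure X}
    {g : X → ℝ} {α : ℝ} (hint : Integrable (fun x => (g x - α) ^ 2) μ)
    (h : ∫ x, (g x - α) ^ 2 ∂μ ≤ 0) : ∀ᵐ x ∂μ, g x = α := by
  have hnn : 0 ≤ fun x => (g x - α) ^ 2 := fun x => sq_nonneg _
  filter_upwards [(integral_eq_zero_iff_of_nonneg hnn hint).1
    (le_antisymm h (integral_nonneg hnn))] with x hx
  exact sub_eq_zero.1 (pow_eq_zero_iff two_ne_zero |>.1 hx)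

/-- Theorem 2.2: the truncated two-dimensional moment problem with `M = 1`, `N = 2` is
solvable iff (a) all six moments vanish, or (b) `s_{0,0} > 0` and `s_{m,n} = α^n s_{m,0}`
for some real `α`, or (c) `s_{0,0} > 0` and `s_{0,0} s_{0,2} - s_{0,1}² > 0`. -/
theorem truncated_moment_problem_M1_N2_solvable_iff (s : ℕ → ℕ → ℝ) :
    (∃ μ : Measure (ℝ × ℝ), ∀ m ≤ 1, ∀ n ≤ 2,
        Integrable (fun p : ℝ × ℝ => p.1 ^ m * p.2 ^ n) μ ∧
        ∫ p : ℝ × ℝ, p.1 ^ m * p.2 ^ n ∂μ = s m n)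
    ↔ ((s 0 0 = 0 ∧ s 0 1 = 0 ∧ s 0 2 = 0 ∧ s 1 0 = 0 ∧ s 1 1 = 0 ∧ s 1 2 = 0) ∨
      (0 < s 0 0 ∧ ∃ α : ℝ, ∀ m ≤ 1, ∀ n : ℕ, 1 ≤ n → n ≤ 2 → s m n = α ^ n * s m 0) ∨
      (0 < s 0 0 ∧ 0 < s 0 0 * s 0 2 - s 0 1 ^ 2)) := by
  constructor
  · rintro ⟨μ, hμ⟩
    have h00 := hμ 0 (by norm_num) 0 (by norm_num)
    have h01 := hμ 0 (by norm_num) 1 (by norm_num)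
    have h02 := hμ 0 (by norm_num) 2 (by norm_num)
    simp only [pow_zero, one_mul, pow_one] at h00 h01 h02
    have hfin : IsFiniteMeasure μ := (integrable_const_iff_isFiniteMeasure one_ne_zero).1 h00.1
    have hs : 0 ≤ s 0 0 := h00.2 ▸ integral_nonneg fun _ => zero_le_one
    rcases hs.eq_or_lt with hs | hs
    · left
      have hzero : μ = 0 := by
        have := h00.2
        rw [← hs] at this
        simpa [measureReal_def, ENNReal.toReal_eq_zero_iff] using this
      have hall : ∀ m ≤ 1, ∀ n ≤ 2, s m n = 0 := fun m hm n hn => by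
        rw [← (hμ m hm n hn).2, hzero, integral_zero_measure]
      exact ⟨hall _ (by simp) _ (by simp), hall _ (by simp) _ (by simp),
        hall _ (by simp) _ (by simp), hall _ (by simp) _ (by simp),
        hall _ (by simp) _ (by simp), hall _ (by simp) _ (by simp)⟩
    · right
      by_cases hdet : 0 < s 0 0 * s 0 2 - s 0 1 ^ 2
      · exact Or.inr ⟨hs, hdet⟩
      refine Or.inl ⟨hs, s 0 1 / s 0 0, fun m hm n _ hn => ?_⟩
      set α := s 0 1 / s 0 0 with hα
      have hexp : (fun p : ℝ × ℝ => (p.2 - α) ^ 2) =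
          fun p => p.2 ^ 2 - 2 * α * p.2 + α ^ 2 * 1 := by
        funext p
        ring
      have hsub : Integrable (fun p : ℝ × ℝ => p.2 ^ 2 - 2 * α * p.2) μ :=
        h02.1.sub (h01.1.const_mul _)
      have hint : Integrable (fun p : ℝ × ℝ => (p.2 - α) ^ 2) μ := by
        rw [hexp]
        exact hsub.add (h00.1.const_mul _)
      have hval : ∫ p : ℝ × ℝ, (p.2 - α) ^ 2 ∂μ = (s 0 0 * s 0 2 - s 0 1 ^ 2) / s 0 0 := by
        rw [hexp, integral_add hsub (h00.1.const_mul _), integral_sub h02.1 (h01.1.const_mul _),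
          integral_const_mul, integral_const_mul, h00.2, h01.2, h02.2, hα]
        field_simp
        ring
      have hae := ae_eq_const_of_integral_sub_sq_nonpos hint
        (hval ▸ div_nonpos_of_nonpos_of_nonneg (not_lt.1 hdet) hs.le)
      rw [← (hμ m hm n hn).2, ← (hμ m hm 0 (by norm_num)).2, ← integral_const_mul]
      refine integral_congr_ae ?_
      filter_upwards [hae] with p hp
      rw [hp, pow_zero, mul_one, mul_comm]
  · rintro (⟨h00, h01, h02, h10, h11, h12⟩ | ⟨hs, α, hα⟩ | ⟨hs, hdet⟩)
    · refine ⟨0, fun m hm n hn => ⟨integrable_zero_measure, ?_⟩⟩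
      interval_cases m <;> interval_cases n <;> simp [*]
    · have hα' : ∀ m ≤ 1, ∀ n ≤ 2, s m n = α ^ n * s m 0 := fun m hm n hn => by
        rcases Nat.eq_zero_or_pos n with rfl | hpos
        · simp
        · exact hα m hm n hpos hn
      refine exists_measure_moments_of_weights (ι := Unit) s (fun _ => s 0 0) (fun _ => s 1 0)
        (fun _ => α) (fun _ => hs) (fun n hn => ?_) (fun n hn => ?_)
      · simp [hα' 0 (by norm_num) n hn, mul_comm]
      · simp [hα' 1 le_rfl n hn, mul_comm]
    · exact exists_measure_moments_of_hankel_pos s hs hdet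
end

section
/- Let {s_{m,n}} with m ∈ {0,1}, n ∈ {0,1,2} be real numbers with s_{0,0} > 0 and s_{0,0} s_{0,2} − s_{0,1}² > 0. Let a_2 be any real number with a_2 > √(s_{0,2}/s_{0,0}), and set a_1 = s_{0,1}/s_{0,0}, a_0 = −a_2. Then there exists a nonnegative Borel measure μ on ℝ², supported in the union of the three horizontal lines {x_2 = a_0}, {x_2 = a_1}, {x_2 = a_2}, such that ∫_{ℝ²} x_1^m x_2^n dμ = s_{m,n} for all m ∈ {0,1}, n ∈ {0,1,2}. -/
open MeasureTheory

/-- Every real function is integrable against a nonnegative combination of three point masses,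
and its integral is the corresponding weighted sum of values. -/
theorem integrable_and_integral_three_diracs {α : Type*} [MeasurableSpace α]
    [MeasurableSingletonClass α] {u v w : ℝ} (hu : 0 ≤ u) (hv : 0 ≤ v) (hw : 0 ≤ w)
    (p q r : α) (f : α → ℝ) :
    Integrable f (ENNReal.ofReal u • Measure.dirac p + ENNReal.ofReal v • Measure.dirac q +
        ENNReal.ofReal w • Measure.dirac r) ∧
      ∫ x, f x ∂(ENNReal.ofReal u • Measure.dirac p + ENNReal.ofReal v • Measure.dirac q +
        ENNReal.ofReal w • Measure.dirac r) = u * f p + v * f q + w * f r := by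
  have key : ∀ (c : ℝ) (x : α), Integrable f (ENNReal.ofReal c • Measure.dirac x) := fun c x =>
    (integrable_dirac enorm_lt_top).smul_measure ENNReal.ofReal_ne_top
  refine ⟨((key u p).add_measure (key v q)).add_measure (key w r), ?_⟩
  rw [integral_add_measure ((key u p).add_measure (key v q)) (key w r),
    integral_add_measure (key u p) (key v q)]
  simp [integral_smul_measure, integral_dirac, ENNReal.toReal_ofReal, hu, hv, hw]

/-- Construction of solutions in the case `(c)` of Theorem 2.2: if `s_{0,0} > 0` and
`s_{0,0} s_{0,2} - s_{0,1}² > 0`, then for any `a_2 > √(s_{0,2}/s_{0,0})`, with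
`a_1 = s_{0,1}/s_{0,0}` and `a_0 = -a_2`, the truncated two-dimensional moment problem
with `M = 1`, `N = 2` has a solution supported in the union of the three lines
`x_2 = a_0`, `x_2 = a_1`, `x_2 = a_2`. -/
theorem truncated_moment_problem_M1_N2_solution_on_three_lines
    (s : ℕ → ℕ → ℝ) (h0 : 0 < s 0 0) (hdet : 0 < s 0 0 * s 0 2 - s 0 1 ^ 2)
    (a0 a1 a2 : ℝ) (ha2 : Real.sqrt (s 0 2 / s 0 0) < a2)
    (ha1 : a1 = s 0 1 / s 0 0) (ha0 : a0 = -a2) :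
    ∃ μ : Measure (ℝ × ℝ),
      μ ({p : ℝ × ℝ | p.2 = a0} ∪ {p : ℝ × ℝ | p.2 = a1} ∪ {p : ℝ × ℝ | p.2 = a2})ᶜ = 0 ∧
      ∀ m ≤ 1, ∀ n ≤ 2,
        Integrable (fun p : ℝ × ℝ => p.1 ^ m * p.2 ^ n) μ ∧
        ∫ p : ℝ × ℝ, p.1 ^ m * p.2 ^ n ∂μ = s m n := by
  subst ha0
  have hq : s 0 2 / s 0 0 < a2 ^ 2 := (Real.sqrt_lt' ((Real.sqrt_nonneg _).trans_lt ha2)).1 ha2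
  have ha : 0 < a2 := (Real.sqrt_nonneg _).trans_lt ha2
  have h01 : s 0 1 = s 0 0 * a1 := by rw [ha1]; field_simp
  have hvar : 0 < s 0 2 - s 0 0 * a1 ^ 2 := by
    rw [h01] at hdet
    refine pos_of_mul_pos_right (b := s 0 2 - s 0 0 * a1 ^ 2) (a := s 0 0) ?_ h0.le
    linarith
  have hq' : s 0 2 < a2 ^ 2 * s 0 0 := (div_lt_iff₀ h0).1 hq
  have hsq : a1 ^ 2 < a2 ^ 2 := by
    refine lt_of_mul_lt_mul_left (a := s 0 0) ?_ h0.le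
    linarith
  obtain ⟨hl, hr⟩ := abs_lt.1 ((sq_lt_sq₀ (abs_nonneg a1) ha.le).1 (by rwa [sq_abs]))
  have hp : 0 < a2 + a1 := by linarith
  have hm : 0 < a2 - a1 := by linarith
  -- The masses and the first moments on the three lines, by Lagrange interpolation.
  obtain ⟨w0, hw0⟩ : ∃ w, w = (s 0 2 - s 0 0 * a1 ^ 2) / ((a2 + a1) * (2 * a2)) := ⟨_, rfl⟩
  obtain ⟨w1, hw1⟩ : ∃ w, w = (a2 ^ 2 * s 0 0 - s 0 2) / ((a2 + a1) * (a2 - a1)) := ⟨_, rfl⟩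
  obtain ⟨w2, hw2⟩ : ∃ w, w = (s 0 2 - s 0 0 * a1 ^ 2) / ((a2 - a1) * (2 * a2)) := ⟨_, rfl⟩
  obtain ⟨v0, hv0⟩ : ∃ v, v = (s 1 2 - (a2 + a1) * s 1 1 + a2 * a1 * s 1 0) /
    ((a2 + a1) * (2 * a2)) := ⟨_, rfl⟩
  obtain ⟨v1, hv1⟩ : ∃ v, v = (a2 ^ 2 * s 1 0 - s 1 2) / ((a2 + a1) * (a2 - a1)) := ⟨_, rfl⟩
  obtain ⟨v2, hv2⟩ : ∃ v, v = (s 1 2 + (a2 - a1) * s 1 1 - a2 * a1 * s 1 0) /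
    ((a2 - a1) * (2 * a2)) := ⟨_, rfl⟩
  have pos0 : 0 < w0 := by rw [hw0]; positivity
  have pos1 : 0 < w1 := by rw [hw1]; exact div_pos (by linarith) (by positivity)
  have pos2 : 0 < w2 := by rw [hw2]; positivity
  refine ⟨ENNReal.ofReal w0 • Measure.dirac (v0 / w0, -a2) +
    ENNReal.ofReal w1 • Measure.dirac (v1 / w1, a1) +
    ENNReal.ofReal w2 • Measure.dirac (v2 / w2, a2), ?_, fun m hm1 n hn2 => ?_⟩
  · simp [Measure.dirac_apply]
  · obtain ⟨hf, heq⟩ := integrable_and_integral_three_diracs pos0.le pos1.le pos2.le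
      (v0 / w0, -a2) (v1 / w1, a1) (v2 / w2, a2) (fun p : ℝ × ℝ => p.1 ^ m * p.2 ^ n)
    refine ⟨hf, heq.trans ?_⟩
    simp only [← mul_assoc]
    interval_cases m
    · simp only [pow_zero, mul_one, hw0, hw1, hw2]
      interval_cases n
      all_goals try rw [h01]
      all_goals field_simp
      all_goals ring
    · simp only [pow_one, hv0, hv1, hv2]
      interval_cases n
      all_goals field_simp
      all_goals ring
end

section
/- Let {s_{m,n}}_{m,n ∈ {0,1,2,3}} be real numbers satisfying s_{0,0} > 0, s_{0,0} s_{0,2} − s_{0,1}² > 0, and s_{0,0} s_{2,0} − s_{1,0}² > 0. Let I_1, I_2, I_3 be the sets of positive real numbers a_2 satisfying, respectively: (−a_2² s_{0,0} + s_{0,2})(−a_2² s_{2,0} + s_{2,2}) > (−a_2² s_{1,0} + s_{1,2})²; (a_2 s_{0,0} − s_{0,1})(a_2 s_{2,0} − s_{2,1}) > (a_2 s_{1,0} − s_{1,1})²; (a_2 s_{0,0} + s_{0,1})(a_2 s_{2,0} + s_{2,1}) > (a_2 s_{1,0} + s_{1,1})². If the intersection (|s_{0,1}|/s_{0,0}, √(s_{0,2}/s_{0,0}))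 ∩ I_1 ∩ I_2 ∩ I_3 is nonempty, then there exists a nonnegative Borel measure μ on ℝ² such that x_1^m x_2^n is μ-integrable and ∫_{ℝ²} x_1^m x_2^n dμ = s_{m,n} for all m, n ∈ {0,1,2,3}. -/
open MeasureTheory Filter Topology

/-- A positive definite quadruple of prescribed moments `c 0, c 1, c 2, c 3` is realised by two
atoms of nonnegative weight. -/
lemma exists_two_atoms (c : ℕ → ℝ) (h0 : 0 < c 0) (hdet : c 1 ^ 2 < c 0 * c 2) :
    ∃ x y p q : ℝ, 0 ≤ p ∧ 0 ≤ q ∧ ∀ m ≤ 3, p * x ^ m + q * y ^ m = c m := by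
  obtain ⟨e, he⟩ : ∃ e, c 1 = c 0 * e := ⟨c 1 / c 0, by field_simp⟩
  obtain ⟨v, hv⟩ : ∃ v, c 2 = c 0 * (v + e ^ 2) := ⟨c 2 / c 0 - e ^ 2, by field_simp; ring⟩
  have hv0 : 0 < v := by
    rw [he, hv] at hdet
    have : 0 < c 0 ^ 2 * v := by linarith
    exact pos_of_mul_pos_right this (by positivity)
  obtain ⟨d, hd⟩ : ∃ d, c 3 = c 0 * (v * d + 3 * e * v + e ^ 3) :=
    ⟨(c 3 / c 0 - 3 * e * v - e ^ 3) / v, by field_simp; ring⟩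
  have hr : √(d ^ 2 + 4 * v) ^ 2 = d ^ 2 + 4 * v := Real.sq_sqrt (by positivity)
  have habs : |d| < √(d ^ 2 + 4 * v) := by
    rw [← Real.sqrt_sq_eq_abs]
    exact Real.sqrt_lt_sqrt (sq_nonneg d) (by linarith)
  obtain ⟨hd1, hd2⟩ := abs_lt.1 habs
  obtain ⟨u, w, hu, hw, huw, rfl⟩ : ∃ u w : ℝ, 0 < u ∧ 0 < w ∧ v = u * w ∧ d = u - w :=
    ⟨(√(d ^ 2 + 4 * v) + d) / 2, (√(d ^ 2 + 4 * v) - d) / 2, by linarith, by linarith,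
      by linear_combination -hr / 4, by ring⟩
  subst huw
  have hs : u + w ≠ 0 := by positivity
  refine ⟨e + u, e - w, c 0 * w / (u + w), c 0 * u / (u + w), by positivity, by positivity, ?_⟩
  intro m hm
  interval_cases m
  · field_simp; ring
  · rw [he]; field_simp; ring
  · rw [hv]; field_simp; ring
  · rw [hd]; field_simp; ring

/-- A positive definite quadruple of moments, scaled by `k > 0`, is realised by a measure on the
horizontal line at height `t`. -/
lemma exists_measure_on_line (c : ℕ → ℝ) (h0 : 0 < c 0) (hdet : c 1 ^ 2 < c 0 * c 2)
    {k : ℝ} (hk : 0 < k) (t : ℝ) :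
    ∃ μ : Measure (ℝ × ℝ), ∀ m ≤ 3, ∀ n : ℕ,
      Integrable (fun p : ℝ × ℝ => p.1 ^ m * p.2 ^ n) μ ∧
      ∫ p : ℝ × ℝ, p.1 ^ m * p.2 ^ n ∂μ = k * c m * t ^ n := by
  obtain ⟨x, y, p, q, hp, hq, h⟩ := exists_two_atoms c h0 hdet
  refine ⟨ENNReal.ofReal (k * p) • Measure.dirac (x, t) +
    ENNReal.ofReal (k * q) • Measure.dirac (y, t), fun m hm n => ?_⟩
  have hint (z r : ℝ) : Integrable (fun p : ℝ × ℝ => p.1 ^ m * p.2 ^ n)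
      (ENNReal.ofReal r • Measure.dirac (z, t)) :=
    (integrable_dirac enorm_lt_top).smul_measure ENNReal.ofReal_ne_top
  refine ⟨(hint x _).add_measure (hint y _), ?_⟩
  rw [integral_add_measure (hint x _) (hint y _), integral_smul_measure, integral_smul_measure,
    integral_dirac, integral_dirac, ENNReal.toReal_ofReal (by positivity),
    ENNReal.toReal_ofReal (by positivity), ← h m hm]
  simp only [smul_eq_mul]
  ring

/-- Positive definiteness of a Hankel matrix is stable under small perturbations. -/
lemma eventually_posDef_add_smul (A B : ℕ → ℝ) (h0 : 0 < A 0) (hdet : A 1 ^ 2 < A 0 * A 2) :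
    ∀ᶠ ε : ℝ in 𝓝 0, 0 < A 0 + ε * B 0 ∧
      (A 1 + ε * B 1) ^ 2 < (A 0 + ε * B 0) * (A 2 + ε * B 2) := by
  refine ContinuousAt.eventually_lt (by fun_prop) (by fun_prop) ?_ |>.and
    (ContinuousAt.eventually_lt (by fun_prop) (by fun_prop) ?_)
  · simpa using h0
  · simpa using hdet

/-- Theorem 3.1: sufficient conditions for the solvability of the truncated
two-dimensional moment problem with `M = N = 3`. If `s_{0,0} > 0`,
`s_{0,0} s_{0,2} - s_{0,1}² > 0`, `s_{0,0} s_{2,0} - s_{1,0}² > 0`, and the intersection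
`(|s_{0,1}|/s_{0,0}, √(s_{0,2}/s_{0,0})) ∩ I_1 ∩ I_2 ∩ I_3` is nonempty, then the moment
problem has a solution. -/
theorem truncated_moment_problem_M3_N3_solvable (s : ℕ → ℕ → ℝ)
    (h1 : 0 < s 0 0) (h2 : 0 < s 0 0 * s 0 2 - s 0 1 ^ 2)
    (h3 : 0 < s 0 0 * s 2 0 - s 1 0 ^ 2)
    (hex : (Set.Ioo (|s 0 1| / s 0 0) (Real.sqrt (s 0 2 / s 0 0)) ∩
      {a2 : ℝ | 0 < a2 ∧
        (-a2 ^ 2 * s 1 0 + s 1 2) ^ 2 <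
          (-a2 ^ 2 * s 0 0 + s 0 2) * (-a2 ^ 2 * s 2 0 + s 2 2)} ∩
      {a2 : ℝ | 0 < a2 ∧
        (a2 * s 1 0 - s 1 1) ^ 2 < (a2 * s 0 0 - s 0 1) * (a2 * s 2 0 - s 2 1)} ∩
      {a2 : ℝ | 0 < a2 ∧
        (a2 * s 1 0 + s 1 1) ^ 2 < (a2 * s 0 0 + s 0 1) * (a2 * s 2 0 + s 2 1)}).Nonempty) :
    ∃ μ : Measure (ℝ × ℝ), ∀ m ≤ 3, ∀ n ≤ 3,
      Integrable (fun p : ℝ × ℝ => p.1 ^ m * p.2 ^ n) μ ∧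
      ∫ p : ℝ × ℝ, p.1 ^ m * p.2 ^ n ∂μ = s m n := by
  obtain ⟨a, ⟨⟨⟨hlo, hhi⟩, ha, hI1⟩, -, hI2⟩, -, hI3⟩ := hex
  rw [div_lt_iff₀ h1, abs_lt] at hlo
  rw [Real.lt_sqrt ha.le, lt_div_iff₀ h1] at hhi
  have hsq : Tendsto (fun ε : ℝ => ε ^ 2) (𝓝 0) (𝓝 0) := by
    simpa using (continuous_pow 2).tendsto (0 : ℝ)
  have hright := hsq.eventually (eventually_posDef_add_smul (fun m => a * s m 0 + s m 1)
    (fun m => -(a * s m 2 + s m 3)) (by linarith) hI3)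
  have hleft := hsq.eventually (eventually_posDef_add_smul (fun m => a * s m 0 - s m 1)
    (fun m => -(a * s m 2 - s m 3)) (by linarith) hI2)
  have htop := eventually_posDef_add_smul (fun m => -a ^ 2 * s m 0 + s m 2)
    (fun m => s m 3 - a ^ 2 * s m 1) (by linarith) hI1
  have hbot := eventually_posDef_add_smul (fun m => -a ^ 2 * s m 0 + s m 2)
    (fun m => -(s m 3 - a ^ 2 * s m 1)) (by linarith) hI1
  have hsmall : ∀ᶠ ε : ℝ in 𝓝 0, ε ^ 2 * a ^ 2 < 1 :=
    ContinuousAt.eventually_lt (by fun_prop) (by fun_prop) (by simp)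
  obtain ⟨ε, ⟨⟨⟨⟨⟨hr0, hr⟩, hl0, hl⟩, ht0, ht⟩, hb0, hb⟩, hε1⟩, hε⟩ :=
    ((((((hright.and hleft).and htop).and hbot).and hsmall).filter_mono
      (nhdsWithin_le_nhds (s := Set.Ioi 0))).and self_mem_nhdsWithin).exists
  replace hε : 0 < ε := hε
  obtain ⟨D, hD⟩ : ∃ D, D = 1 - ε ^ 2 * a ^ 2 := ⟨_, rfl⟩
  have hD0 : 0 < D := by linarith
  have hinner : 0 < 1 / (2 * a * D) := by positivity
  have houter : 0 < ε ^ 2 / (2 * D) := by positivity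
  obtain ⟨μ₁, hμ₁⟩ := exists_measure_on_line
    (fun m => a * s m 0 + s m 1 + ε ^ 2 * -(a * s m 2 + s m 3)) hr0 hr hinner a
  obtain ⟨μ₂, hμ₂⟩ := exists_measure_on_line
    (fun m => a * s m 0 - s m 1 + ε ^ 2 * -(a * s m 2 - s m 3)) hl0 hl hinner (-a)
  obtain ⟨μ₃, hμ₃⟩ := exists_measure_on_line
    (fun m => -a ^ 2 * s m 0 + s m 2 + ε * (s m 3 - a ^ 2 * s m 1)) ht0 ht houter (1 / ε)
  obtain ⟨μ₄, hμ₄⟩ := exists_measure_on_line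
    (fun m => -a ^ 2 * s m 0 + s m 2 + ε * -(s m 3 - a ^ 2 * s m 1)) hb0 hb houter (-(1 / ε))
  refine ⟨μ₁ + μ₂ + (μ₃ + μ₄), fun m hm n hn => ?_⟩
  obtain ⟨i₁, e₁⟩ := hμ₁ m hm n
  obtain ⟨i₂, e₂⟩ := hμ₂ m hm n
  obtain ⟨i₃, e₃⟩ := hμ₃ m hm n
  obtain ⟨i₄, e₄⟩ := hμ₄ m hm n
  refine ⟨(i₁.add_measure i₂).add_measure (i₃.add_measure i₄), ?_⟩
  rw [integral_add_measure (i₁.add_measure i₂) (i₃.add_measure i₄),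
    integral_add_measure i₁ i₂, integral_add_measure i₃ i₄, e₁, e₂, e₃, e₄]
  interval_cases n <;> · field_simp; rw [hD]; ring
end

section
/- Let s_{0,0}, s_{0,1}, s_{0,2}, s_{0,3} be real numbers with s_{0,0} > 0 and s_{0,0} s_{0,2} − s_{0,1}² > 0, and let a_2 be a real number with |s_{0,1}|/s_{0,0} < a_2 < √(s_{0,2}/s_{0,0}). If a_3 is a real number satisfying a_3 > |a_2² s_{0,1} − s_{0,3}|/(−a_2² s_{0,0} + s_{0,2}) and a_3 > √((|s_{0,3}| + a_2 s_{0,2})/(a_2 s_{0,0} − |s_{0,1}|)), then both inequalities |a_2² s_{0,1} − s_{0,3}| < a_3(−a_2² s_{0,0} + s_{0,2}) and |a_3² s_{0,1} − s_{0,3}| < a_2(a_3² s_{0,0} − s_{0,2}) hold. -/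
/-- If `a_3` satisfies the lower bounds (3.49) and (3.50), then the two inequalities of
the system (3.45) hold. -/
theorem lower_bounds_imply_abs_inequalities
    (s00 s01 s02 s03 : ℝ) (h0 : 0 < s00) (hdet : 0 < s00 * s02 - s01 ^ 2)
    (a2 : ℝ) (ha2l : |s01| / s00 < a2) (ha2u : a2 < Real.sqrt (s02 / s00))
    (a3 : ℝ)
    (ha3a : |a2 ^ 2 * s01 - s03| / (-a2 ^ 2 * s00 + s02) < a3)
    (ha3b : Real.sqrt ((|s03| + a2 * s02) / (a2 * s00 - |s01|)) < a3) :
    |a2 ^ 2 * s01 - s03| < a3 * (-a2 ^ 2 * s00 + s02) ∧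
    |a3 ^ 2 * s01 - s03| < a2 * (a3 ^ 2 * s00 - s02) := by
  have ha2 : 0 < a2 := (div_nonneg (abs_nonneg s01) h0.le).trans_lt ha2l
  have ha3 : 0 < a3 := (Real.sqrt_nonneg _).trans_lt ha3b
  have hden : 0 < a2 * s00 - |s01| := sub_pos.2 ((div_lt_iff₀ h0).1 ha2l)
  have hden' : 0 < -a2 ^ 2 * s00 + s02 := by
    have := (lt_div_iff₀ h0).1 ((Real.lt_sqrt ha2.le).1 ha2u)
    linarith
  refine ⟨(div_lt_iff₀ hden').1 ha3a, ?_⟩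
  have hsq := (div_lt_iff₀ hden).1 ((Real.sqrt_lt' ha3).1 ha3b)
  calc |a3 ^ 2 * s01 - s03| ≤ |a3 ^ 2 * s01| + |s03| := abs_sub _ _
    _ = a3 ^ 2 * |s01| + |s03| := by rw [abs_mul, abs_of_nonneg (sq_nonneg a3)]
    _ < a2 * (a3 ^ 2 * s00 - s02) := by linarith
end
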